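/- Let X^n, A^n, B^n be random vectors on finite alphabets with X^n — A^n — B^n a Markov chain, and let Q be uniformly distributed on {1,...,n} and independent of (X^n, A^n, B^n). Then H(A^n) ≥ n · I(X_Q; A^n, B^n, X^{Q-1}, Q) where X_Q denotes the Q-th coordinate of X^n, provided additionally that X^n is an i.i.d. sequence (so that I(X_Q; X^{Q-1}, Q) = 0 terms can be handled); in particular H(A^n) ≥ n · I(X_Q; A_Q, B_Q). -/

import Mathlib

open scoped Classical BigOperators

noncomputable section

namespace Coord

variable {Ω : Type*} [Fintype Ω]

/-- `p` is a probability mass function on the finite sample space `Ω`. -/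
def IsPmf (p : Ω → ℝ) : Prop := (∀ ω, 0 ≤ p ω) ∧ ∑ ω, p ω = 1

/-- Distribution (pmf) of the random variable `X` under `p`. -/
def dist (p : Ω → ℝ) {α : Type*} [Fintype α] (X : Ω → α) (a : α) : ℝ :=
  ∑ ω, if X ω = a then p ω else 0

/-- Shannon entropy (base 2) of `X` under `p`. -/
def H (p : Ω → ℝ) {α : Type*} [Fintype α] (X : Ω → α) : ℝ :=
  -∑ a, dist p X a * Real.logb 2 (dist p X a)

/-- Conditional entropy `H(X | Y)`. -/
def Hc (p : Ω → ℝ) {α β : Type*} [Fintype α] [Fintype β] (X : Ω → α) (Y : Ω → β) : ℝ :=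
  H p (fun ω => (X ω, Y ω)) - H p Y

/-- Mutual information `I(X ; Y)`. -/
def MI (p : Ω → ℝ) {α β : Type*} [Fintype α] [Fintype β] (X : Ω → α) (Y : Ω → β) : ℝ :=
  H p X + H p Y - H p (fun ω => (X ω, Y ω))

/-- Conditional mutual information `I(X ; Y | Z)`. -/
def MIc (p : Ω → ℝ) {α β γ : Type*} [Fintype α] [Fintype β] [Fintype γ]
    (X : Ω → α) (Y : Ω → β) (Z : Ω → γ) : ℝ :=
  H p (fun ω => (X ω, Z ω)) + H p (fun ω => (Y ω, Z ω))
    - H p (fun ω => (X ω, Y ω, Z ω)) - H p Z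

/-- `X` and `Y` are independent under `p`. -/
def Indep (p : Ω → ℝ) {α β : Type*} [Fintype α] [Fintype β] (X : Ω → α) (Y : Ω → β) : Prop :=
  ∀ a b, dist p (fun ω => (X ω, Y ω)) (a, b) = dist p X a * dist p Y b

/-- Markov chain `X - A - B` : `X` and `B` are conditionally independent given `A`. -/
def Markov (p : Ω → ℝ) {α β γ : Type*} [Fintype α] [Fintype β] [Fintype γ]
    (X : Ω → α) (A : Ω → β) (B : Ω → γ) : Prop :=
  ∀ x a b, dist p (fun ω => (X ω, A ω, B ω)) (x, a, b) * dist p A a =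
    dist p (fun ω => (X ω, A ω)) (x, a) * dist p (fun ω => (A ω, B ω)) (a, b)

/-- The random vector `X` is i.i.d. with per-coordinate marginal `p0`. -/
def IID {n : ℕ} (p : Ω → ℝ) {𝒳 : Type*} [Fintype 𝒳] (X : Ω → Fin n → 𝒳) (p0 : 𝒳 → ℝ) : Prop :=
  ∀ x : Fin n → 𝒳, dist p X x = ∏ i, p0 (x i)

/-- The joint pmf on `Ω × Fin n` obtained by adjoining a uniform, independent time index `Q`. -/
def unif {n : ℕ} (p : Ω → ℝ) : Ω × Fin n → ℝ := fun ωq => p ωq.1 / n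

/-- The strict prefix `X^{q-1}` of a random vector, padded with `none`. -/
def pre {n : ℕ} {𝒳 : Type*} (X : Ω → Fin n → 𝒳) (q : Fin n) : Ω → Fin n → Option 𝒳 :=
  fun ω i => if (i : ℕ) < (q : ℕ) then some (X ω i) else none

end Coord

open Coord

/-!
Since `X` is i.i.d., `n · H(X_Q) = H(X)`.  Conditioning on `Q` averages over the indices, so for
every side variable `W` the chain rule gives
`n · H(X_Q | W, X^{Q-1}, Q) = ∑ q, H(X_q | W, X^{q-1}) = H(X | W)`.
Subtracting, `n · I(X_Q; W, X^{Q-1}, Q) = I(X; W)`.  For `W = (A, B)` the Markov property turns the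
right-hand side into `I(X; A) ≤ H(A)`.  The second bound is data processing, `(A_Q, B_Q)` being a
function of `(A, B, Q)`.
-/

namespace Coord

variable {Ω α β γ : Type*} {p : Ω → ℝ} {n : ℕ}

lemma unif_nonneg (hp : ∀ ω, 0 ≤ p ω) (w : Ω × Fin n) : 0 ≤ unif p w :=
  div_nonneg (hp w.1) n.cast_nonneg

/-- The first `k` coordinates of the random vector `X`, padded with `none`.  It agrees with
`pre X q` for `k = q`, but also allows `k = n`, as the telescoping in the chain rule requires. -/
def initialSegment (X : Ω → Fin n → α) (k : ℕ) : Ω → Fin n → Option α :=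
  fun ω i => if (i : ℕ) < k then some (X ω i) else none

lemma initialSegment_eq_iff {X : Ω → Fin n → α} {k : ℕ} {ω ω' : Ω} :
    initialSegment X k ω = initialSegment X k ω' ↔ ∀ i : Fin n, (i : ℕ) < k → X ω i = X ω' i := by
  rw [funext_iff]
  refine forall_congr' fun i => ?_
  by_cases hi : (i : ℕ) < k <;> simp [initialSegment, hi]

lemma initialSegment_succ_eq_iff {X : Ω → Fin n → α} {q : Fin n} {ω ω' : Ω} :
    initialSegment X (q + 1) ω = initialSegment X (q + 1) ω' ↔
      X ω q = X ω' q ∧ initialSegment X q ω = initialSegment X q ω' := by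
  simp only [initialSegment_eq_iff, Nat.lt_succ_iff_lt_or_eq, Fin.val_inj, or_imp, forall_and,
    forall_eq, and_comm]

variable [Fintype Ω] [Fintype α] [Fintype β] [Fintype γ]

section Distribution

lemma dist_nonneg (hp : ∀ ω, 0 ≤ p ω) (X : Ω → α) (a : α) : 0 ≤ dist p X a :=
  Finset.sum_nonneg fun ω _ => ite_nonneg (hp ω) le_rfl

lemma dist_apply_pos (hp : ∀ ω, 0 ≤ p ω) (X : Ω → α) {ω : Ω} (hω : p ω ≠ 0) :
    0 < dist p X (X ω) :=
  Finset.sum_pos' (fun ω' _ => ite_nonneg (hp ω') le_rfl)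
    ⟨ω, Finset.mem_univ ω, by simpa using (hp ω).lt_of_ne' hω⟩

lemma sum_dist_mul (p : Ω → ℝ) (X : Ω → α) (g : α → ℝ) :
    ∑ a, dist p X a * g a = ∑ ω, p ω * g (X ω) := by
  simp only [dist, Finset.sum_mul, ite_mul, zero_mul]
  rw [Finset.sum_comm]
  exact Finset.sum_congr rfl fun ω _ => by simp

lemma sum_dist (p : Ω → ℝ) (X : Ω → α) : ∑ a, dist p X a = ∑ ω, p ω := by
  simpa using sum_dist_mul p X fun _ => 1

lemma dist_comp (p : Ω → ℝ) (X : Ω → α) (f : α → β) (b : β) :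
    dist p (fun ω => f (X ω)) b = ∑ a with f a = b, dist p X a := by
  simpa [dist, Finset.sum_filter] using (sum_dist_mul p X fun a => if f a = b then 1 else 0).symm

lemma sum_dist_prodMk (p : Ω → ℝ) (X : Ω → α) (Y : Ω → β) (b : β) :
    ∑ a, dist p (fun ω => (X ω, Y ω)) (a, b) = dist p Y b := by
  rw [dist_comp p (fun ω => (X ω, Y ω)) Prod.snd b, Finset.sum_filter, Fintype.sum_prod_type]
  simp

lemma dist_apply_le_dist_comp (hp : ∀ ω, 0 ≤ p ω) (X : Ω → α) (f : α → β) (a : α) :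
    dist p X a ≤ dist p (fun ω => f (X ω)) (f a) := by
  rw [dist_comp p X f]
  exact Finset.single_le_sum (fun a' _ => dist_nonneg hp X a') (by simp)

end Distribution

section Entropy

lemma H_eq_sum_mul_logb (p : Ω → ℝ) (X : Ω → α) :
    H p X = -∑ ω, p ω * Real.logb 2 (dist p X (X ω)) := by
  rw [H, sum_dist_mul p X fun a => Real.logb 2 (dist p X a)]

lemma H_congr_of_eq_iff (p : Ω → ℝ) {X : Ω → α} {Y : Ω → β}
    (h : ∀ ω ω', X ω = X ω' ↔ Y ω = Y ω') : H p X = H p Y := by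
  simp only [H_eq_sum_mul_logb, dist, h]

lemma H_comp_le (hp : ∀ ω, 0 ≤ p ω) (X : Ω → α) (f : α → β) :
    H p (fun ω => f (X ω)) ≤ H p X := by
  rw [H_eq_sum_mul_logb, H_eq_sum_mul_logb]
  refine neg_le_neg (Finset.sum_le_sum fun ω _ => ?_)
  obtain hω | hω := eq_or_ne (p ω) 0
  · simp [hω]
  · exact mul_le_mul_of_nonneg_left (Real.logb_le_logb_of_le one_lt_two
      (dist_apply_pos hp X hω) (dist_apply_le_dist_comp hp X f _)) (hp ω)

lemma H_pi_eq_sum_of_dist_eq_prod {ι : Type*} [Fintype ι] [DecidableEq ι] (hp : ∀ ω, 0 ≤ p ω)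
    {X : Ω → ι → α} (h : ∀ x, dist p X x = ∏ i, dist p (fun ω => X ω i) (x i)) :
    H p X = ∑ i, H p fun ω => X ω i := by
  simp only [H_eq_sum_mul_logb, Finset.sum_neg_distrib]
  rw [Finset.sum_comm]
  refine congrArg Neg.neg (Finset.sum_congr rfl fun ω _ => ?_)
  obtain hω | hω := eq_or_ne (p ω) 0
  · simp [hω]
  · rw [h, Real.logb_prod _ _ fun i _ => (dist_apply_pos hp (fun ω => X ω i) hω).ne',
      Finset.mul_sum]

end Entropy

section MutualInformation

lemma sum_mul_logb_nonpos {ι : Type*} {s : Finset ι} {b : ℝ} (hb : 1 < b) {w r : ι → ℝ}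
    (hw : ∀ i ∈ s, 0 ≤ w i) (hr : ∀ i ∈ s, w i ≠ 0 → 0 < r i)
    (h : ∑ i ∈ s, w i * r i ≤ ∑ i ∈ s, w i) : ∑ i ∈ s, w i * Real.logb b (r i) ≤ 0 := by
  have hlog : ∑ i ∈ s, w i * Real.log (r i) ≤ 0 :=
    calc ∑ i ∈ s, w i * Real.log (r i) ≤ ∑ i ∈ s, w i * (r i - 1) := by
          refine Finset.sum_le_sum fun i hi => ?_
          obtain hi0 | hi0 := eq_or_ne (w i) 0
          · simp [hi0]
          · exact mul_le_mul_of_nonneg_left (Real.log_le_sub_one_of_pos (hr i hi hi0)) (hw i hi)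
      _ ≤ 0 := by simpa [mul_sub] using h
  simp only [Real.logb, ← mul_div_assoc, ← Finset.sum_div]
  exact div_nonpos_of_nonpos_of_nonneg hlog (Real.log_pos hb).le

/-- The ratio `P(x, z) P(y, z) / (P(x, y, z) P(z))` at the outcome `ω`, whose expected logarithm is
`-I(X; Y | Z)`. -/
def condRatio (p : Ω → ℝ) (X : Ω → α) (Y : Ω → β) (Z : Ω → γ) (ω : Ω) : ℝ :=
  dist p (fun ω => (X ω, Z ω)) (X ω, Z ω) * dist p (fun ω => (Y ω, Z ω)) (Y ω, Z ω) /
    (dist p (fun ω => (X ω, Y ω, Z ω)) (X ω, Y ω, Z ω) * dist p Z (Z ω))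

lemma condRatio_pos (hp : ∀ ω, 0 ≤ p ω) (X : Ω → α) (Y : Ω → β) (Z : Ω → γ) {ω : Ω}
    (hω : p ω ≠ 0) : 0 < condRatio p X Y Z ω :=
  div_pos
    (mul_pos (dist_apply_pos hp (fun ω => (X ω, Z ω)) hω)
      (dist_apply_pos hp (fun ω => (Y ω, Z ω)) hω))
    (mul_pos (dist_apply_pos hp (fun ω => (X ω, Y ω, Z ω)) hω) (dist_apply_pos hp Z hω))

lemma MIc_eq_neg_sum_mul_logb_condRatio (hp : ∀ ω, 0 ≤ p ω) (X : Ω → α) (Y : Ω → β)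
    (Z : Ω → γ) :
    MIc p X Y Z = -∑ ω, p ω * Real.logb 2 (condRatio p X Y Z ω) := by
  simp only [MIc, H_eq_sum_mul_logb, ← Finset.sum_neg_distrib, ← Finset.sum_add_distrib,
    ← Finset.sum_sub_distrib]
  refine Finset.sum_congr rfl fun ω _ => ?_
  obtain hω | hω := eq_or_ne (p ω) 0
  · simp [hω]
  · have hXZ := (dist_apply_pos hp (fun ω => (X ω, Z ω)) hω).ne'
    have hYZ := (dist_apply_pos hp (fun ω => (Y ω, Z ω)) hω).ne'
    have hXYZ := (dist_apply_pos hp (fun ω => (X ω, Y ω, Z ω)) hω).ne'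
    have hZ := (dist_apply_pos hp Z hω).ne'
    rw [condRatio, Real.logb_div (mul_ne_zero hXZ hYZ) (mul_ne_zero hXYZ hZ),
      Real.logb_mul hXZ hYZ, Real.logb_mul hXYZ hZ]
    ring

-- Only an inequality: triples with `P(x, y, z) = 0` drop out of the left-hand side.
lemma sum_mul_condRatio_le (hp : ∀ ω, 0 ≤ p ω) (X : Ω → α) (Y : Ω → β) (Z : Ω → γ) :
    ∑ ω, p ω * condRatio p X Y Z ω ≤ ∑ ω, p ω := by
  set dXZ := dist p fun ω => (X ω, Z ω)
  set dYZ := dist p fun ω => (Y ω, Z ω)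
  set dXYZ := dist p fun ω => (X ω, Y ω, Z ω)
  set dZ := dist p Z with hdZ
  calc ∑ ω, p ω * condRatio p X Y Z ω
      = ∑ t : α × β × γ, dXYZ t * (dXZ (t.1, t.2.2) * dYZ t.2 / (dXYZ t * dZ t.2.2)) :=
        (sum_dist_mul p (fun ω => (X ω, Y ω, Z ω)) fun t =>
          dXZ (t.1, t.2.2) * dYZ t.2 / (dXYZ t * dZ t.2.2)).symm
    _ ≤ ∑ t : α × β × γ, dXZ (t.1, t.2.2) * dYZ t.2 / dZ t.2.2 := by
        refine Finset.sum_le_sum fun t _ => ?_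
        obtain ht | ht := eq_or_ne (dXYZ t) 0
        · simpa [ht] using div_nonneg
            (mul_nonneg (dist_nonneg hp _ _) (dist_nonneg hp _ _)) (dist_nonneg hp Z t.2.2)
        · rw [← div_div, div_right_comm, mul_div_cancel₀ _ ht]
    _ = ∑ z, (∑ x, dXZ (x, z)) * (∑ y, dYZ (y, z)) / dZ z := by
        simp only [Fintype.sum_prod_type, Finset.sum_mul_sum, Finset.sum_div]
        rw [Finset.sum_comm_cycle]
    _ = ∑ z, dZ z * dZ z / dZ z := by
        simp only [dXZ, dYZ, sum_dist_prodMk, hdZ]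
    _ = ∑ ω, p ω := by simp only [mul_self_div_self, hdZ, sum_dist]

theorem MIc_nonneg (hp : ∀ ω, 0 ≤ p ω) (X : Ω → α) (Y : Ω → β) (Z : Ω → γ) :
    0 ≤ MIc p X Y Z := by
  rw [MIc_eq_neg_sum_mul_logb_condRatio hp]
  exact neg_nonneg.2 (sum_mul_logb_nonpos one_lt_two (fun ω _ => hp ω)
    (fun ω _ hω => condRatio_pos hp X Y Z hω) (sum_mul_condRatio_le hp X Y Z))

lemma Markov.MIc_eq_zero (hp : ∀ ω, 0 ≤ p ω) {X : Ω → α} {A : Ω → β} {B : Ω → γ}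
    (hM : Markov p X A B) : MIc p X B A = 0 := by
  have hdist : ∀ x a b, dist p (fun ω => (X ω, B ω, A ω)) (x, b, a) * dist p A a =
      dist p (fun ω => (X ω, A ω)) (x, a) * dist p (fun ω => (B ω, A ω)) (b, a) := by
    simpa only [Markov, dist, Prod.mk.injEq, and_comm] using hM
  rw [MIc_eq_neg_sum_mul_logb_condRatio hp, neg_eq_zero]
  refine Finset.sum_eq_zero fun ω _ => ?_
  obtain hω | hω := eq_or_ne (p ω) 0
  · simp [hω]
  · have hpos := condRatio_pos hp X B A hω
    rw [condRatio, hdist] at hpos ⊢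
    rw [div_self (div_ne_zero_iff.1 hpos.ne').2, Real.logb_one, mul_zero]

lemma MI_eq_H_sub_Hc (p : Ω → ℝ) (X : Ω → α) (Y : Ω → β) : MI p X Y = H p X - Hc p X Y := by
  rw [MI, Hc]
  ring

lemma MI_congr_right (p : Ω → ℝ) (X : Ω → α) {Y : Ω → β} {Z : Ω → γ}
    (h : ∀ ω ω', Y ω = Y ω' ↔ Z ω = Z ω') : MI p X Y = MI p X Z := by
  have hXY : H p (fun ω => (X ω, Y ω)) = H p fun ω => (X ω, Z ω) :=
    H_congr_of_eq_iff p fun ω ω' => by simp only [Prod.mk.injEq, h]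
  rw [MI, MI, H_congr_of_eq_iff p h, hXY]

lemma MI_prodMk_right (p : Ω → ℝ) (X : Ω → α) (Y : Ω → β) (Z : Ω → γ) :
    MI p X (fun ω => (Y ω, Z ω)) = MI p X Z + MIc p X Y Z := by
  rw [MI, MI, MIc]
  ring

lemma MI_le_H_right (hp : ∀ ω, 0 ≤ p ω) (X : Ω → α) (Y : Ω → β) : MI p X Y ≤ H p Y := by
  have hX_le := H_comp_le hp (fun ω => (X ω, Y ω)) Prod.fst
  rw [MI]
  linarith

theorem MI_comp_right_le (hp : ∀ ω, 0 ≤ p ω) (X : Ω → α) (Y : Ω → β) (f : β → γ) :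
    MI p X (fun ω => f (Y ω)) ≤ MI p X Y :=
  calc MI p X (fun ω => f (Y ω)) ≤ MI p X (fun ω => f (Y ω)) + MIc p X Y fun ω => f (Y ω) :=
        le_add_of_nonneg_right (MIc_nonneg hp _ _ _)
    _ = MI p X fun ω => (Y ω, f (Y ω)) := (MI_prodMk_right _ _ _ _).symm
    _ = MI p X Y := MI_congr_right p X fun ω ω' => by
        simpa only [Prod.mk.injEq, and_iff_left_iff_imp] using congrArg f

theorem Markov.MI_prodMk_le_H (hp : ∀ ω, 0 ≤ p ω) {X : Ω → α} {A : Ω → β} {B : Ω → γ}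
    (hM : Markov p X A B) : MI p X (fun ω => (A ω, B ω)) ≤ H p A :=
  calc MI p X (fun ω => (A ω, B ω)) = MI p X fun ω => (B ω, A ω) :=
        MI_congr_right p X fun ω ω' => by simp only [Prod.mk.injEq, and_comm]
    _ = MI p X A := by rw [MI_prodMk_right, hM.MIc_eq_zero hp, add_zero]
    _ ≤ H p A := MI_le_H_right hp X A

end MutualInformation

section TimeSharing

lemma dist_unif (p : Ω → ℝ) (Z : Ω × Fin n → α) (a : α) :
    dist (unif p) Z a = (∑ q, dist p (fun ω => Z (ω, q)) a) / n := by
  simp only [dist, unif, Fintype.sum_prod_type_right, Finset.sum_div, ite_div, zero_div]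

lemma dist_unif_prodMk_index (p : Ω → ℝ) (Z : Fin n → Ω → α) (a : α) (q : Fin n) :
    dist (unif p) (fun w => (Z w.2 w.1, w.2)) (a, q) = dist p (Z q) a / n := by
  rw [dist_unif, Finset.sum_eq_single q]
  · simp [dist]
  · intro r _ hr
    simp [dist, hr]
  · simp

lemma mul_H_unif_prodMk_index (p : Ω → ℝ) (Z : Fin n → Ω → α) :
    n * H (unif p) (fun w => (Z w.2 w.1, w.2)) =
      ∑ q, H p (Z q) + n * ((∑ ω, p ω) * Real.logb 2 n) := by
  obtain rfl | hn := eq_or_ne n 0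
  · simp
  have hn' : (n : ℝ) ≠ 0 := Nat.cast_ne_zero.2 hn
  have hterm (d : ℝ) : n * (d / n * Real.logb 2 (d / n)) =
      d * Real.logb 2 d - d * Real.logb 2 n := by
    obtain rfl | hd := eq_or_ne d 0
    · simp
    · rw [Real.logb_div hd hn']
      field_simp
  simp only [H, Fintype.sum_prod_type_right, dist_unif_prodMk_index, mul_neg, Finset.mul_sum,
    hterm, Finset.sum_sub_distrib, Finset.sum_neg_distrib]
  simp only [← Finset.sum_mul, sum_dist, Finset.sum_const, Finset.card_univ, Fintype.card_fin,
    nsmul_eq_mul]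
  ring

lemma mul_Hc_unif (p : Ω → ℝ) (Z : Fin n → Ω → α) (Y : Fin n → Ω → β) :
    n * Hc (unif p) (fun w => Z w.2 w.1) (fun w => (Y w.2 w.1, w.2)) =
      ∑ q, Hc p (Z q) (Y q) := by
  have hassoc : H (unif p) (fun w : Ω × Fin n => (Z w.2 w.1, Y w.2 w.1, w.2)) =
      H (unif p) fun w => ((Z w.2 w.1, Y w.2 w.1), w.2) :=
    H_congr_of_eq_iff _ fun w w' => by simp only [Prod.mk.injEq, and_assoc]
  simp only [Hc, hassoc, mul_sub, mul_H_unif_prodMk_index p Y,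
    mul_H_unif_prodMk_index p fun q ω => (Z q ω, Y q ω), Finset.sum_sub_distrib]
  ring

lemma mul_H_unif_of_dist_eq {Z : Fin n → Ω → α}
    (h : ∀ q r a, dist p (Z q) a = dist p (Z r) a) :
    n * H (unif p) (fun w => Z w.2 w.1) = ∑ q, H p (Z q) := by
  have hH (q : Fin n) : H p (Z q) = H (unif p) fun w : Ω × Fin n => Z w.2 w.1 := by
    have hn : (n : ℝ) ≠ 0 := Nat.cast_ne_zero.2 q.pos.ne'
    have hdist (a : α) : dist (unif p) (fun w : Ω × Fin n => Z w.2 w.1) a = dist p (Z q) a := by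
      simp [dist_unif, h _ q, hn]
    simp only [H, hdist]
  simp [hH]

theorem sum_Hc_pre (p : Ω → ℝ) (X : Ω → Fin n → α) (W : Ω → β) :
    ∑ q, Hc p (fun ω => X ω q) (fun ω => (W ω, pre X q ω)) = Hc p X W := by
  let h : ℕ → ℝ := fun k => H p fun ω => (W ω, initialSegment X k ω)
  have hstep (q : Fin n) :
      Hc p (fun ω => X ω q) (fun ω => (W ω, pre X q ω)) = h (q + 1) - h q := by
    refine congrArg (· - h q) (H_congr_of_eq_iff p fun ω ω' => ?_)
    simp only [Prod.mk.injEq, initialSegment_succ_eq_iff]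
    exact and_left_comm
  have hfull : h n = H p fun ω => (X ω, W ω) := H_congr_of_eq_iff p fun ω ω' => by
    simp only [Prod.mk.injEq, initialSegment_eq_iff, Fin.is_lt, forall_const]
    rw [and_comm, funext_iff]
  have hempty : h 0 = H p W := H_congr_of_eq_iff p fun ω ω' => by
    simp [initialSegment_eq_iff]
  simp only [hstep]
  rw [Fin.sum_univ_eq_sum_range (fun k => h (k + 1) - h k) n, Finset.sum_range_sub, hfull, hempty,
    Hc]

end TimeSharing

section IID

variable {X : Ω → Fin n → α} {p₀ : α → ℝ}

lemma IID.sum_pow_eq (h : IID p X p₀) : (∑ a, p₀ a) ^ n = ∑ ω, p ω := by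
  rw [Fintype.sum_pow, ← sum_dist p X]
  exact Finset.sum_congr rfl fun x _ => (h x).symm

lemma IID.dist_apply (h : IID p X p₀) (i : Fin n) (a : α) :
    dist p (fun ω => X ω i) a = p₀ a * (∑ b, p₀ b) ^ (n - 1) := by
  let s : Fin n → Finset α := Function.update (fun _ => Finset.univ) i {a}
  have hs : ({x | x i = a} : Finset (Fin n → α)) = Fintype.piFinset s := by
    ext x
    simp [s, Fintype.mem_piFinset,
      Function.forall_update_iff (β := fun _ => Finset α) _ fun j t => x j ∈ t]
  calc dist p (fun ω => X ω i) a = ∑ x : Fin n → α with x i = a, ∏ j, p₀ (x j) := by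
        rw [dist_comp p X (· i)]
        exact Finset.sum_congr rfl fun x _ => h x
    _ = ∏ j, ∑ b ∈ s j, p₀ b := by rw [hs, Finset.prod_univ_sum]
    _ = p₀ a * (∑ b, p₀ b) ^ (n - 1) := by
        have hs_ne (j : Fin n) (hj : j ∈ Finset.univ.erase i) : s j = Finset.univ :=
          Function.update_of_ne (Finset.ne_of_mem_erase hj) _ _
        rw [← Finset.mul_prod_erase _ _ (Finset.mem_univ i),
          Finset.prod_congr rfl fun j hj => congrArg (fun t => ∑ b ∈ t, p₀ b) (hs_ne j hj)]
        simp [s]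

-- `IID` determines only the `n`-th power of the mass of `p₀`: for even `n` the mass can be `-1`.
lemma IID.dist_eq_prod (hp : ∑ ω, p ω = 1) (h : IID p X p₀) (x : Fin n → α) :
    dist p X x = ∏ i, dist p (fun ω => X ω i) (x i) := by
  simp only [h.dist_apply, Finset.prod_mul_distrib, Finset.prod_const, Finset.card_univ,
    Fintype.card_fin]
  rw [← pow_mul, mul_comm (n - 1) n, pow_mul, h.sum_pow_eq, hp, one_pow, mul_one, h x]

lemma IID.mul_H_unif (hp : IsPmf p) (h : IID p X p₀) :
    n * H (unif p) (fun w => X w.1 w.2) = H p X := by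
  have hident (q r : Fin n) (a : α) :
      dist p (fun ω => X ω q) a = dist p (fun ω => X ω r) a := by
    rw [h.dist_apply, h.dist_apply]
  exact (mul_H_unif_of_dist_eq hident).trans
    (H_pi_eq_sum_of_dist_eq_prod hp.1 fun x => h.dist_eq_prod hp.2 x).symm

theorem IID.mul_MI_unif_pre (hp : IsPmf p) (h : IID p X p₀) (W : Ω → β) :
    n * MI (unif p) (fun w => X w.1 w.2) (fun w => ((W w.1, pre X w.2 w.1), w.2)) = MI p X W := by
  rw [MI_eq_H_sub_Hc, mul_sub, h.mul_H_unif hp,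
    mul_Hc_unif p (fun q ω => X ω q) (fun q ω => (W ω, pre X q ω)), sum_Hc_pre, ← MI_eq_H_sub_Hc]

end IID

end Coord

/-- With `X^n` i.i.d., `X^n — A^n — B^n` Markov, and `Q` uniform and independent,
`H(A^n) ≥ n·I(X_Q; A^n, B^n, X^{Q-1}, Q)`; in particular `H(A^n) ≥ n·I(X_Q; A_Q, B_Q)`. -/
theorem stmt1 {Ω 𝒳 𝒜 ℬ : Type*} [Fintype Ω] [Fintype 𝒳] [Fintype 𝒜] [Fintype ℬ]
    {n : ℕ} (hn : 0 < n) (p : Ω → ℝ) (hp : IsPmf p) (p0 : 𝒳 → ℝ)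
    (X : Ω → Fin n → 𝒳) (A : Ω → Fin n → 𝒜) (B : Ω → Fin n → ℬ)
    (hM : Markov p X A B) (hiid : IID p X p0) :
    H p A ≥ n * MI (unif p)
        (fun ωq => X ωq.1 ωq.2)
        (fun ωq => (A ωq.1, B ωq.1, pre X ωq.2 ωq.1, ωq.2)) ∧
    H p A ≥ n * MI (unif p)
        (fun ωq => X ωq.1 ωq.2)
        (fun ωq => (A ωq.1 ωq.2, B ωq.1 ωq.2)) := by
  have hsingle : n * MI (unif p) (fun ωq => X ωq.1 ωq.2)
      (fun ωq => (A ωq.1, B ωq.1, pre X ωq.2 ωq.1, ωq.2)) = MI p X fun ω => (A ω, B ω) := by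
    rw [← hiid.mul_MI_unif_pre hp fun ω => (A ω, B ω)]
    exact congrArg _ (MI_congr_right _ _ fun w w' => by simp only [Prod.mk.injEq, and_assoc])
  have hprocess := MI_comp_right_le (unif_nonneg hp.1) (fun ωq : Ω × Fin n => X ωq.1 ωq.2)
    (fun ωq => (A ωq.1, B ωq.1, pre X ωq.2 ωq.1, ωq.2))
    (fun y => (y.1 y.2.2.2, y.2.1 y.2.2.2))
  have hbound := hsingle.trans_le (hM.MI_prodMk_le_H hp.1)
  exact ⟨hbound, (mul_le_mul_of_nonneg_left hprocess n.cast_nonneg).trans hbound⟩
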